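/- Let (s_ν)_{ν≥1} be a sequence of unit vectors in the real sequence space ℓ₂, let n : ℕ → ℕ with n(ν) ≥ 1, and let ε : ℕ → (0, ∞). For each ν let H_ν = ℝ^{n(ν)}, and let H = ℓ₂ ⊕ H₁ ⊕ H₂ ⊕ ⋯ be the Hilbert (orthogonal, ℓ²-) direct sum, with P : H → ℓ₂ the orthogonal projection onto the ℓ₂ summand. Then for each ν there exist unit vectors g₀^ν, …, g_{n(ν)}^ν forming a basis of the subspace span{s_ν} ⊕ H_ν of H, such that for every ε > 0, every integer m ≥ 1, and every vector w = λ₁ g_{j₁}^{ν₁} + ⋯ + λ_m g_{j_m}^{ν_m} (real scalars λ_k, indices 0 ≤ j_k ≤ n(ν_k)) with n(ν_k) ≥ m and ε(ν_k) < ε for all k = 1, …, m, one has |Pw| ≤ ε √m · |(Id − P)w|. -/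

import Mathlib

noncomputable section

/-- The family of summands: the `none` summand is `ℓ₂`, and the `some ν` summand is
`H_ν = ℝ^{n(ν)}`. -/
def SummandSpace (n : ℕ → ℕ) : Option ℕ → Type
  | none => lp (fun _ : ℕ => ℝ) 2
  | some ν => EuclideanSpace ℝ (Fin (n ν))

instance (n : ℕ → ℕ) : ∀ o, NormedAddCommGroup (SummandSpace n o)
  | none => inferInstanceAs (NormedAddCommGroup (lp (fun _ : ℕ => ℝ) 2))
  | some ν => inferInstanceAs (NormedAddCommGroup (EuclideanSpace ℝ (Fin (n ν))))

instance (n : ℕ → ℕ) : ∀ o, InnerProductSpace ℝ (SummandSpace n o)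
  | none => inferInstanceAs (InnerProductSpace ℝ (lp (fun _ : ℕ => ℝ) 2))
  | some ν => inferInstanceAs (InnerProductSpace ℝ (EuclideanSpace ℝ (Fin (n ν))))

/-- `H = ℓ₂ ⊕ H₁ ⊕ H₂ ⊕ ⋯`, the Hilbert (ℓ²-) direct sum. -/
abbrev BigH (n : ℕ → ℕ) : Type := lp (SummandSpace n) 2

/-- The orthogonal projection `P : H → ℓ₂`-summand (as a map `H → H`). -/
def Pproj (n : ℕ → ℕ) (w : BigH n) : BigH n :=
  lp.single 2 none ((w : ∀ o, SummandSpace n o) none)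

/-- The subspace `span{s_ν} ⊕ H_ν` of `H`. -/
def Uspace (n : ℕ → ℕ) (s : ℕ → lp (fun _ : ℕ => ℝ) 2) (ν : ℕ) :
    Submodule ℝ (BigH n) :=
  Submodule.span ℝ
    ({lp.single 2 none (show SummandSpace n none from s ν)} ∪
      Set.range fun v : EuclideanSpace ℝ (Fin (n ν)) =>
        lp.single 2 (some ν) (show SummandSpace n (some ν) from v))

/-!
Inside `H_ν`, of dimension `n`, take the vertices `u₀, …, uₙ` of a simplex with barycentre `0`. Up
to scaling, their only linear relation is `∑ⱼ uⱼ = 0`, so as soon as one coefficient vanishes, the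
size of `∑ⱼ cⱼ uⱼ` controls all the others, and in particular `∑ⱼ cⱼ`. Hence the tilted vectors
`δ s_ν + uⱼ` with `δ` small form a basis of `span {s_ν} ⊕ H_ν` such that a combination omitting one
of them has an `s_ν`-part at most `ε(ν)` times its `H_ν`-part. A combination of `m ≤ n(ν)` vectors
always omits one in each block it meets; summing over the at most `m` blocks, Cauchy-Schwarz costs
the factor `√m`.
-/

open Module Submodule NormedSpace

section TiltedFamilies

variable {K V W κ : Type*} [Field K] [AddCommGroup V] [Module K V] [AddCommGroup W] [Module K W]

lemma linearIndependent_prodMk_of_affineIndependent {x : V} (hx : x ≠ 0) {u : κ → W}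
    (hu : AffineIndependent K u) : LinearIndependent K fun j => (x, u j) := by
  rw [linearIndependent_iff']
  intro t c hc
  obtain ⟨hfst, hsnd⟩ : (∑ i ∈ t, c i) • x = 0 ∧ ∑ i ∈ t, c i • u i = 0 := by
    simpa [Prod.ext_iff, Prod.fst_sum, Prod.snd_sum, Finset.sum_smul] using hc
  have hsum : ∑ i ∈ t, c i = 0 := (smul_eq_zero.1 hfst).resolve_right hx
  exact affineIndependent_iff.1 hu t c hsum hsnd

lemma span_range_prodMk_of_sum_eq_zero [CharZero K] [Fintype κ] [Nonempty κ] (x : V) {u : κ → W}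
    (hu : ∑ j, u j = 0) :
    span K (Set.range fun j => (x, u j)) = (span K {x}).prod (span K (Set.range u)) := by
  set S := span K (Set.range fun j => (x, u j)) with hS
  have tilted_mem (j : κ) : (x, u j) ∈ S := subset_span ⟨j, rfl⟩
  have inl_mem : (x, (0 : W)) ∈ S := by
    have hsum : ∑ j, (x, u j) = (Fintype.card κ : K) • (x, (0 : W)) := by
      ext <;> simp [Prod.fst_sum, Prod.snd_sum, hu, Nat.cast_smul_eq_nsmul]
    have hcard : (Fintype.card κ : K) ≠ 0 := Nat.cast_ne_zero.2 Fintype.card_ne_zero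
    exact (smul_mem_iff S hcard).1 (hsum ▸ sum_mem fun j _ => tilted_mem j)
  have inr_mem (j : κ) : ((0 : V), u j) ∈ S := by
    simpa using sub_mem (tilted_mem j) inl_mem
  apply le_antisymm
  · rw [hS, span_le]
    rintro _ ⟨j, rfl⟩
    exact ⟨mem_span_singleton_self x, subset_span ⟨j, rfl⟩⟩
  · rw [prod_le_iff, map_span_le, map_span_le]
    exact ⟨by rintro _ rfl; exact inl_mem, by rintro _ ⟨j, rfl⟩; exact inr_mem j⟩

end TiltedFamilies

section CentredSimplex

variable {R V : Type*} [Ring R] [AddCommGroup V] [Module R V] {n : ℕ}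

/-- The vertices `b₀, …, bₙ₋₁, -∑ᵢ bᵢ` of a simplex with barycentre `0` in a space with basis
`b`. -/
def centredSimplex (b : Basis (Fin n) R V) : Fin (n + 1) → V :=
  Fin.snoc b (-∑ i, b i)

lemma sum_centredSimplex (b : Basis (Fin n) R V) : ∑ j, centredSimplex b j = 0 := by
  simp [Fin.sum_univ_castSucc, centredSimplex]

lemma equivFun_sum_smul_centredSimplex (b : Basis (Fin n) R V) (c : Fin (n + 1) → R) (i : Fin n) :
    b.equivFun (∑ j, c j • centredSimplex b j) i = c i.castSucc - c (Fin.last n) := by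
  simp [Fin.sum_univ_castSucc, centredSimplex, Finsupp.single_apply, sub_eq_add_neg]

lemma span_range_centredSimplex (b : Basis (Fin n) R V) :
    span R (Set.range (centredSimplex b)) = ⊤ := by
  refine top_unique (b.span_eq.ge.trans (span_mono ?_))
  rintro _ ⟨i, rfl⟩
  exact ⟨i.castSucc, by simp [centredSimplex]⟩

lemma affineIndependent_centredSimplex [NoZeroDivisors R] [CharZero R] (b : Basis (Fin n) R V) :
    AffineIndependent R (centredSimplex b) := by
  rw [affineIndependent_iff_of_fintype]
  intro c hsum hc
  rw [Finset.weightedVSub_eq_linear_combination _ hsum] at hc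
  have eq_last (i : Fin (n + 1)) : c i = c (Fin.last n) := by
    induction i using Fin.lastCases with
    | last => rfl
    | cast i => simpa [hc, sub_eq_zero, eq_comm] using equivFun_sum_smul_centredSimplex b c i
  have last_eq_zero : c (Fin.last n) = 0 := by
    have hcard : (n + 1 : R) ≠ 0 := Nat.cast_add_one_ne_zero n
    simpa [eq_last, hcard] using hsum
  exact fun i => (eq_last i).trans last_eq_zero

end CentredSimplex

section Estimate

variable {F G : Type*} [NormedAddCommGroup F] [NormedSpace ℝ F] [NormedAddCommGroup G]
  [NormedSpace ℝ G] {n : ℕ}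

lemma exists_forall_abs_sub_le_norm_sum_centredSimplex (b : Basis (Fin n) ℝ G) :
    ∃ C, 0 < C ∧ ∀ (c : Fin (n + 1) → ℝ) (i j : Fin (n + 1)),
      |c i - c j| ≤ C * ‖∑ k, c k • centredSimplex b k‖ := by
  obtain ⟨C, hC, hbound⟩ := (b.equivFunL : G →L[ℝ] Fin n → ℝ).bound
  refine ⟨2 * C, by positivity, fun c => ?_⟩
  set x := ∑ k, c k • centredSimplex b k with hx
  have abs_sub_last_le (i : Fin (n + 1)) : |c i - c (Fin.last n)| ≤ C * ‖x‖ := by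
    induction i using Fin.lastCases with
    | last => simpa using by positivity
    | cast i =>
      rw [← equivFun_sum_smul_centredSimplex b, ← hx]
      exact (norm_le_pi_norm (b.equivFunL x) i).trans (hbound x)
  intro i j
  calc |c i - c j| ≤ |c i - c (Fin.last n)| + |c (Fin.last n) - c j| := abs_sub_le _ _ _
    _ = |c i - c (Fin.last n)| + |c j - c (Fin.last n)| := by rw [abs_sub_comm (c j)]
    _ ≤ 2 * C * ‖x‖ := by linarith [abs_sub_last_le i, abs_sub_last_le j]

lemma exists_forall_abs_sum_le_norm_sum_centredSimplex (b : Basis (Fin n) ℝ G) :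
    ∃ C, 0 < C ∧ ∀ c : Fin (n + 1) → ℝ, (∃ j, c j = 0) →
      |∑ j, c j| ≤ C * ‖∑ j, c j • centredSimplex b j‖ := by
  obtain ⟨C, hC, hbound⟩ := exists_forall_abs_sub_le_norm_sum_centredSimplex b
  refine ⟨(n + 1) * C, by positivity, fun c ⟨j₀, hj₀⟩ => ?_⟩
  set x := ∑ j, c j • centredSimplex b j
  calc |∑ j, c j| ≤ ∑ j, |c j| := Finset.abs_sum_le_sum_abs _ _
    _ = ∑ j, |c j - c j₀| := by simp only [hj₀, sub_zero]
    _ ≤ ∑ _j : Fin (n + 1), C * ‖x‖ := Finset.sum_le_sum fun j _ => hbound c j j₀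
    _ = (n + 1) * C * ‖x‖ := by simp [mul_assoc]

lemma exists_basis_span_prod_top_norm_fst_le (b : Basis (Fin n) ℝ G) {x : F} (hx : x ≠ 0)
    {ε : ℝ} (hε : 0 < ε) :
    ∃ h : Fin (n + 1) → F × G, LinearIndependent ℝ h ∧
      span ℝ (Set.range h) = (span ℝ {x}).prod ⊤ ∧
      ∀ c : Fin (n + 1) → ℝ, (∃ j, c j = 0) →
        ‖(∑ j, c j • h j).1‖ ≤ ε * ‖(∑ j, c j • h j).2‖ := by
  obtain ⟨C, hC, hbound⟩ := exists_forall_abs_sum_le_norm_sum_centredSimplex b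
  have norm_x_pos : 0 < ‖x‖ := norm_pos_iff.2 hx
  set δ : ℝ := ε / (C * ‖x‖) with hδ
  have hδ0 : 0 < δ := div_pos hε (mul_pos hC norm_x_pos)
  refine ⟨fun j => (δ • x, centredSimplex b j), ?_, ?_, fun c hc => ?_⟩
  · exact linearIndependent_prodMk_of_affineIndependent (smul_ne_zero hδ0.ne' hx)
      (affineIndependent_centredSimplex b)
  · rw [span_range_prodMk_of_sum_eq_zero _ (sum_centredSimplex b), span_range_centredSimplex,
      span_singleton_smul_eq hδ0.ne'.isUnit]
  · simp only [Prod.fst_sum, Prod.snd_sum, Prod.smul_mk, ← Finset.sum_smul]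
    calc ‖(∑ j, c j) • δ • x‖ = |∑ j, c j| * (δ * ‖x‖) := by
          rw [norm_smul, norm_smul, Real.norm_eq_abs, Real.norm_of_nonneg hδ0.le]
      _ ≤ C * ‖∑ j, c j • centredSimplex b j‖ * (δ * ‖x‖) := by gcongr; exact hbound c hc
      _ = ε * ‖∑ j, c j • centredSimplex b j‖ := by rw [hδ]; field_simp

end Estimate

section Normalize

variable {κ V : Type*} [NormedAddCommGroup V] [NormedSpace ℝ V]

lemma linearIndependent_normalize {v : κ → V} (hv : LinearIndependent ℝ v) :
    LinearIndependent ℝ fun j => normalize (v j) :=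
  hv.units_smul fun j => Units.mk0 ‖v j‖⁻¹ (inv_ne_zero (norm_ne_zero_iff.2 (hv.ne_zero j)))

lemma span_range_normalize (v : κ → V) :
    span ℝ (Set.range fun j => normalize (v j)) = span ℝ (Set.range v) := by
  apply le_antisymm <;> rw [span_le] <;> rintro _ ⟨j, rfl⟩
  · exact smul_mem _ _ (subset_span ⟨j, rfl⟩)
  · rw [← norm_smul_normalize (v j)]
    exact smul_mem _ _ (subset_span ⟨j, rfl⟩)

end Normalize

section Regrouping

variable {κ ι R M : Type*} {α : ι → Type*} [Fintype κ] [DecidableEq ι] [∀ i, Fintype (α i)]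
  [∀ i, DecidableEq (α i)]

/-- The total coefficient of `g i a` in `∑ₖ c k • g (ν k) (j k)`. -/
def fiberCoeff [AddCommMonoid R] (ν : κ → ι) (j : ∀ k, α (ν k)) (c : κ → R) (i : ι) (a : α i) : R :=
  ∑ k with (⟨ν k, j k⟩ : Σ i, α i) = ⟨i, a⟩, c k

lemma sum_smul_eq_sum_fiberCoeff_smul [Semiring R] [AddCommMonoid M] [Module R M] (ν : κ → ι)
    (j : ∀ k, α (ν k)) (c : κ → R) (g : ∀ i, α i → M) :
    ∑ k, c k • g (ν k) (j k) =
      ∑ i ∈ Finset.univ.image ν, ∑ a, fiberCoeff ν j c i a • g i a := by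
  have hmaps : ∀ k ∈ Finset.univ, (⟨ν k, j k⟩ : Σ i, α i) ∈
      (Finset.univ.image ν).sigma fun _ => Finset.univ := fun k _ => by simp
  rw [← Finset.sum_fiberwise_of_maps_to hmaps, Finset.sum_sigma]
  refine Finset.sum_congr rfl fun i _ => Finset.sum_congr rfl fun a _ => ?_
  rw [fiberCoeff, Finset.sum_smul]
  refine Finset.sum_congr rfl fun k hk => ?_
  have hg := congrArg (fun q : Σ i, α i => g q.1 q.2) (Finset.mem_filter.1 hk).2
  exact congrArg (c k • ·) hg

lemma exists_fiberCoeff_eq_zero [AddCommMonoid R] (ν : κ → ι) (j : ∀ k, α (ν k)) (c : κ → R)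
    {i : ι} (hcard : Fintype.card κ < Fintype.card (α i)) : ∃ a, fiberCoeff ν j c i a = 0 := by
  suffices ∃ a : α i, ∀ k, (⟨ν k, j k⟩ : Σ i, α i) ≠ ⟨i, a⟩ by
    obtain ⟨a, ha⟩ := this
    exact ⟨a, Finset.sum_eq_zero fun k hk => absurd (Finset.mem_filter.1 hk).2 (ha k)⟩
  by_contra! hcover
  choose f hf using hcover
  refine hcard.not_ge (Fintype.card_le_of_injective f fun a a' h => ?_)
  exact sigma_mk_injective ((hf a).symm.trans (h ▸ hf a'))

end Regrouping

section DirectSum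

lemma sum_norm_apply_le_sqrt_card_mul_norm {α : Type*} {E : α → Type*}
    [∀ i, NormedAddCommGroup (E i)] (f : lp E 2) (S : Finset α) :
    ∑ i ∈ S, ‖f i‖ ≤ √S.card * ‖f‖ := by
  have hsq : ∑ i ∈ S, ‖f i‖ ^ 2 ≤ ‖f‖ ^ 2 := by
    simpa using lp.sum_rpow_le_norm_rpow (p := 2) (by norm_num) f S
  refine le_of_sq_le_sq ?_ (by positivity)
  calc (∑ i ∈ S, ‖f i‖) ^ 2 ≤ S.card * ∑ i ∈ S, ‖f i‖ ^ 2 := sq_sum_le_card_mul_sum_sq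
    _ ≤ S.card * ‖f‖ ^ 2 := by gcongr
    _ = (√S.card * ‖f‖) ^ 2 := by rw [mul_pow, Real.sq_sqrt (Nat.cast_nonneg _)]

variable {ι : Type*} [DecidableEq ι] {E : Option ι → Type*} [∀ o, NormedAddCommGroup (E o)]
  [∀ o, NormedSpace ℝ (E o)]

variable (E) in
/-- The embedding of `E none ⊕ E (some ν)` into the `ℓ²`-direct sum of the spaces `E o`. -/
def blockEmbedding (ν : ι) : E none × E (some ν) →ₗ[ℝ] lp E 2 :=
  (lp.lsingle 2 none).coprod (lp.lsingle 2 (some ν))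

lemma blockEmbedding_apply_none (ν : ι) (p : E none × E (some ν)) :
    blockEmbedding E ν p none = p.1 := by
  simp [blockEmbedding]

lemma blockEmbedding_apply_some (ν : ι) (p : E none × E (some ν)) :
    blockEmbedding E ν p (some ν) = p.2 := by
  simp [blockEmbedding]

lemma blockEmbedding_apply_some_of_ne {ν μ : ι} (h : μ ≠ ν) (p : E none × E (some ν)) :
    blockEmbedding E ν p (some μ) = 0 := by
  simp [blockEmbedding, h]

lemma blockEmbedding_injective (ν : ι) : Function.Injective (blockEmbedding E ν) := by
  intro p q h
  ext
  · rw [← blockEmbedding_apply_none, h, blockEmbedding_apply_none]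
  · rw [← blockEmbedding_apply_some, h, blockEmbedding_apply_some]

lemma map_blockEmbedding_span_singleton_prod_top (ν : ι) (x : E none) :
    ((span ℝ {x}).prod ⊤).map (blockEmbedding E ν) =
      span ℝ ({lp.single 2 none x} ∪ Set.range (lp.single 2 (some ν))) := by
  rw [blockEmbedding, LinearMap.map_coprod_prod, map_span, Set.image_singleton, span_union,
    Submodule.map_top, ← span_eq (LinearMap.range _)]
  rfl

lemma norm_single_none_sum_blockEmbedding_le (T : Finset ι) (p : ∀ ν, E none × E (some ν))
    {ε : ℝ} (hε : 0 ≤ ε) (hp : ∀ ν ∈ T, ‖(p ν).1‖ ≤ ε * ‖(p ν).2‖) {w : lp E 2}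
    (hw : w = ∑ ν ∈ T, blockEmbedding E ν (p ν)) :
    ‖lp.single (E := E) 2 none (w none)‖ ≤
      ε * √T.card * ‖w - lp.single 2 none (w none)‖ := by
  have apply_none : w none = ∑ ν ∈ T, (p ν).1 := by
    simp only [hw, lp.coeFn_sum, Finset.sum_apply, blockEmbedding_apply_none]
  have apply_some : ∀ ν ∈ T, (w - lp.single 2 none (w none)) (some ν) = (p ν).2 := by
    intro ν hν
    simp only [lp.coeFn_sub, Pi.sub_apply, lp.single_apply_ne _ _ _ (Option.some_ne_none ν),
      sub_zero, hw, lp.coeFn_sum, Finset.sum_apply]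
    rw [Finset.sum_eq_single_of_mem ν hν fun μ _ hμ => blockEmbedding_apply_some_of_ne hμ.symm _,
      blockEmbedding_apply_some]
  set r := w - lp.single 2 none (w none)
  calc ‖lp.single (E := E) 2 none (w none)‖ = ‖∑ ν ∈ T, (p ν).1‖ := by
        rw [lp.norm_single (by norm_num), apply_none]
    _ ≤ ∑ ν ∈ T, ε * ‖(p ν).2‖ := norm_sum_le_of_le T hp
    _ = ε * ∑ o ∈ T.map .some, ‖r o‖ := by
        rw [Finset.mul_sum, Finset.sum_map]
        exact Finset.sum_congr rfl fun ν hν => by rw [← apply_some ν hν]; rfl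
    _ ≤ ε * (√T.card * ‖r‖) := by
        gcongr
        simpa only [Finset.card_map] using sum_norm_apply_le_sqrt_card_mul_norm r (T.map .some)
    _ = ε * √T.card * ‖r‖ := (mul_assoc _ _ _).symm

lemma exists_unit_basis_block {n : ℕ} (ν : ι) (b : Basis (Fin n) ℝ (E (some ν))) {x : E none}
    (hx : x ≠ 0) {ε : ℝ} (hε : 0 < ε) :
    ∃ g : Fin (n + 1) → lp E 2, (∀ j, ‖g j‖ = 1) ∧ LinearIndependent ℝ g ∧
      span ℝ (Set.range g) = span ℝ ({lp.single 2 none x} ∪ Set.range (lp.single 2 (some ν))) ∧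
      ∀ c : Fin (n + 1) → ℝ, (∃ j, c j = 0) →
        ∃ p : E none × E (some ν), ‖p.1‖ ≤ ε * ‖p.2‖ ∧ ∑ j, c j • g j = blockEmbedding E ν p := by
  obtain ⟨h, h_indep, h_span, h_tilt⟩ := exists_basis_span_prod_top_norm_fst_le b hx hε
  have v_indep : LinearIndependent ℝ fun j => blockEmbedding E ν (h j) :=
    h_indep.map' _ (LinearMap.ker_eq_bot.2 (blockEmbedding_injective ν))
  refine ⟨fun j => normalize (blockEmbedding E ν (h j)),
    fun j => norm_normalize (v_indep.ne_zero j), linearIndependent_normalize v_indep, ?_, ?_⟩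
  · rw [span_range_normalize, ← map_blockEmbedding_span_singleton_prod_top, ← h_span, map_span,
      ← Set.range_comp]
    rfl
  · rintro c ⟨j₀, hj₀⟩
    refine ⟨_, h_tilt (fun j => c j * ‖blockEmbedding E ν (h j)‖⁻¹) ⟨j₀, by simp [hj₀]⟩, ?_⟩
    simp [NormedSpace.normalize, mul_smul]

end DirectSum

theorem stmt17_general {ι : Type*} [DecidableEq ι] {E : Option ι → Type*}
    [∀ o, NormedAddCommGroup (E o)] [∀ o, NormedSpace ℝ (E o)] (n : ι → ℕ)
    (b : ∀ ν, Basis (Fin (n ν)) ℝ (E (some ν))) (epsf : ι → ℝ) (hepsf : ∀ ν, 0 < epsf ν)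
    (s : ι → E none) (hs : ∀ ν, s ν ≠ 0) :
    ∃ g : (ν : ι) → Fin (n ν + 1) → lp E 2,
      (∀ ν j, ‖g ν j‖ = 1) ∧
      (∀ ν, LinearIndependent ℝ (g ν)) ∧
      (∀ ν, span ℝ (Set.range (g ν)) =
        span ℝ ({lp.single 2 none (s ν)} ∪ Set.range (lp.single 2 (some ν)))) ∧
      ∀ ε : ℝ, 0 ≤ ε → ∀ (m : ℕ) (ν : Fin m → ι) (j : ∀ k : Fin m, Fin (n (ν k) + 1))
        (lam : Fin m → ℝ), (∀ k, m ≤ n (ν k)) → (∀ k, epsf (ν k) ≤ ε) →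
          ∀ w : lp E 2, w = ∑ k, lam k • g (ν k) (j k) →
          ‖lp.single (E := E) 2 none (w none)‖ ≤
            ε * √m * ‖w - lp.single 2 none (w none)‖ := by
  choose g g_unit g_indep g_span g_tilt using
    fun ν => exists_unit_basis_block ν (b ν) (hs ν) (hepsf ν)
  refine ⟨g, g_unit, g_indep, g_span, fun ε hε m ν j lam hm hle w hw => ?_⟩
  rw [sum_smul_eq_sum_fiberCoeff_smul ν j lam g] at hw
  set T := Finset.univ.image ν
  set coeff := fiberCoeff (α := fun μ => Fin (n μ + 1)) ν j lam
  have block_tilt : ∀ μ ∈ T, ∃ p : E none × E (some μ), ‖p.1‖ ≤ ε * ‖p.2‖ ∧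
      ∑ a, coeff μ a • g μ a = blockEmbedding E μ p := by
    intro μ hμ
    obtain ⟨k, -, rfl⟩ := Finset.mem_image.1 hμ
    obtain ⟨p, hp, hsum⟩ := g_tilt (ν k) (coeff (ν k))
      (exists_fiberCoeff_eq_zero (α := fun μ => Fin (n μ + 1)) ν j lam
        (by simpa using Nat.lt_succ_of_le (hm k)))
    exact ⟨p, hp.trans (by gcongr; exact hle k), hsum⟩
  choose! p hp hsum using block_tilt
  have hcard : (T.card : ℝ) ≤ m := by
    exact_mod_cast Finset.card_image_le.trans_eq (Finset.card_fin m)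
  calc ‖lp.single (E := E) 2 none (w none)‖
      ≤ ε * √T.card * ‖w - lp.single 2 none (w none)‖ :=
        norm_single_none_sum_blockEmbedding_le T p hε hp (hw.trans (Finset.sum_congr rfl hsum))
    _ ≤ ε * √m * ‖w - lp.single 2 none (w none)‖ := by gcongr

theorem stmt17 (n : ℕ → ℕ) (hn : ∀ ν, 1 ≤ n ν)
    (epsf : ℕ → ℝ) (hepsf : ∀ ν, 0 < epsf ν)
    (s : ℕ → lp (fun _ : ℕ => ℝ) 2) (hs : ∀ ν, ‖s ν‖ = 1) :
    ∃ g : (ν : ℕ) → Fin (n ν + 1) → BigH n,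
      (∀ ν j, ‖g ν j‖ = 1) ∧
      (∀ ν, LinearIndependent ℝ (g ν)) ∧
      (∀ ν, Submodule.span ℝ (Set.range (g ν)) = Uspace n s ν) ∧
      ∀ ε : ℝ, 0 < ε → ∀ m : ℕ, 1 ≤ m →
        ∀ (ν : Fin m → ℕ) (j : ∀ k : Fin m, Fin (n (ν k) + 1)) (lam : Fin m → ℝ),
          (∀ k, m ≤ n (ν k)) → (∀ k, epsf (ν k) < ε) →
          ‖Pproj n (∑ k, lam k • g (ν k) (j k))‖ ≤
            ε * Real.sqrt m *
              ‖(∑ k, lam k • g (ν k) (j k)) - Pproj n (∑ k, lam k • g (ν k) (j k))‖ := by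
  have hs' : ∀ ν, s ν ≠ 0 := fun ν => norm_ne_zero_iff.1 (by simp [hs ν])
  obtain ⟨g, g_unit, g_indep, g_span, g_proj⟩ := stmt17_general (E := SummandSpace n) n
    (fun ν => (EuclideanSpace.basisFun (Fin (n ν)) ℝ).toBasis) epsf hepsf s hs'
  exact ⟨g, g_unit, g_indep, g_span, fun ε hε m _ ν j lam hm hlt =>
    g_proj ε hε.le m ν j lam hm (fun k => (hlt k).le) _ rfl⟩
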